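/- arXiv:math/0611884 — 2 statements merged into one kernel-verified Lean document; each statement's English description precedes it below -/
import Mathlib

section
/- Let α > -1/2, set β = α (ultraspherical case). Then for every t > 0 and x, y ∈ (-1,1): ∑_{n≥0} R_n^{-1} e^{-nt} P_n^{α,α}(x) P_n^{α,α}(y) = (e^{((2α+1)/2)t} / 2^{α+1/2}) · sinh(t)/(cosh t - xy)^{α+3/2} · ∑_{n≥0} [((2α+3)/4)_n ((2α+5)/4)_n / ((α+1)_n n!)] · [(1-x²)(1-y²)/(cosh t - xy)²]ⁿ, both series converging absolutely (the inner sum is the Gauss hypergeometric series ₂F₁((2α+3)/4, (2α+5)/4; α+1; (1-x²)(1-y²)/(cosh t - xy)²)). -/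
open scoped BigOperators

/-- Pochhammer symbol `(a)_k = a(a+1)⋯(a+k-1)` for real `a`. -/
noncomputable def poch (a : ℝ) (k : ℕ) : ℝ := (ascPochhammer ℝ k).eval a

/-- The Jacobi polynomial `P_n^{α,β}` as a function on `ℝ`. -/
noncomputable def jacobiP (α β : ℝ) (n : ℕ) : ℝ → ℝ := fun x =>
  (poch (α + 1) n / (Nat.factorial n : ℝ)) *
    ∑ k ∈ Finset.range (n + 1),
      (poch (-(n : ℝ)) k * poch ((n : ℝ) + α + β + 1) k) /
        (poch (α + 1) k * (Nat.factorial k : ℝ)) * ((1 - x) / 2) ^ k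

/-- The normalization constant
`R_n = [Γ(α+β+2)/(2n+α+β+1)] ⬝ [(α+1)_n (β+1)_n / (Γ(α+β+n+1) n!)]`. -/
noncomputable def Rn (α β : ℝ) (n : ℕ) : ℝ :=
  Real.Gamma (α + β + 2) / (2 * (n : ℝ) + α + β + 1) *
    (poch (α + 1) n * poch (β + 1) n / (Real.Gamma (α + β + (n : ℝ) + 1) * (Nat.factorial n : ℝ)))


open Polynomial in
lemma poch_zero (a : ℝ) : poch a 0 = 1 := by simp [poch]

lemma poch_succ (a : ℝ) (k : ℕ) : poch a (k + 1) = poch a k * (a + k) := by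
  simp [poch, ascPochhammer_succ_eval]

lemma poch_pos {a : ℝ} (ha : 0 < a) (k : ℕ) : 0 < poch a k := ascPochhammer_pos k a ha

lemma poch_add (a : ℝ) (m n : ℕ) : poch a (m + n) = poch a m * poch (a + m) n := by
  induction n with
  | zero => simp [poch_zero]
  | succ n ih => rw [← add_assoc, poch_succ, poch_succ, ih]; push_cast; ring

lemma poch_succ_left (a : ℝ) (k : ℕ) : poch a (k + 1) = a * poch (a + 1) k := by
  rw [add_comm k 1, poch_add, poch_succ, poch_zero]; simp

lemma poch_double (a : ℝ) (k : ℕ) :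
    poch (2 * a) (2 * k) = 4 ^ k * poch a k * poch (a + 1 / 2) k := by
  induction k with
  | zero => simp [poch_zero]
  | succ k ih =>
    rw [show 2 * (k + 1) = 2 * k + 1 + 1 by ring, poch_succ, poch_succ, ih, poch_succ, poch_succ]
    push_cast; ring

/-- coefficient of `((1-x)/2)^k` in the Gegenbauer polynomial. -/
noncomputable def gA (μ : ℝ) (n k : ℕ) : ℝ :=
  (-4) ^ k * poch μ k * poch (2 * μ + 2 * k) (n - k) / (k.factorial * (n - k).factorial)

open Polynomial in
/-- Gegenbauer polynomial -/
noncomputable def geg (μ : ℝ) (n : ℕ) : ℝ[X] :=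
  ∑ k ∈ Finset.range (n + 1), C (gA μ n k) * (C (1 / 2) * (1 - X)) ^ k

lemma gA_rec (μ : ℝ) (k p : ℕ) :
    gA μ (k + 1 + p) (k + 1) * ((k + 1) * (k + μ + 1 / 2)) =
      -((p + 1) * ((2 * k + p + 1) + 2 * μ)) * gA μ (k + 1 + p) k := by
  have h1 : k + 1 + p - (k + 1) = p := by omega
  have h2 : k + 1 + p - k = p + 1 := by omega
  rw [gA, gA, h1, h2, poch_succ μ k]
  have h3 : poch (2 * μ + 2 * k) (p + 1) * (2 * μ + 2 * k + p + 1)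
      = (2 * μ + 2 * k) * (2 * μ + 2 * k + 1) * poch (2 * μ + 2 * (k + 1)) p := by
    have := poch_succ (2 * μ + 2 * k) (p + 1)
    rw [poch_succ_left, poch_succ_left] at this
    push_cast at this
    rw [show 2 * μ + 2 * (k : ℝ) + 1 + 1 = 2 * μ + 2 * (k + 1) by ring] at this
    linarith
  have f1 : ((k + 1).factorial : ℝ) = (k + 1) * k.factorial := by
    rw [Nat.factorial_succ]; push_cast; ring
  have f2 : ((p + 1).factorial : ℝ) = (p + 1) * p.factorial := by
    rw [Nat.factorial_succ]; push_cast; ring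
  have f3 : (k.factorial : ℝ) ≠ 0 := by positivity
  have f4 : (p.factorial : ℝ) ≠ 0 := by positivity
  rw [f1, f2]
  push_cast
  rw [pow_succ]
  generalize poch (2 * μ + 2 * (k : ℝ)) (p + 1) = a at h3 ⊢
  generalize poch (2 * μ + 2 * ((k : ℝ) + 1)) p = b at h3 ⊢
  field_simp
  linear_combination (2 * poch μ k : ℝ) * h3

open Polynomial in
/-- Gegenbauer ODE -/
def GODE (μ : ℝ) (n : ℕ) (P : ℝ[X]) : Prop :=
  (1 - X ^ 2) * derivative (derivative P) - C (2 * μ + 1) * X * derivative P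
    + C (n * (n + 2 * μ)) * P = 0

open Polynomial in
lemma ode_pow (μ : ℝ) (n k : ℕ) : 
    (1 - X ^ 2) * derivative (derivative ((C (1 / 2) * (1 - X)) ^ k : ℝ[X]))
      - C (2 * μ + 1) * X * derivative ((C (1 / 2) * (1 - X)) ^ k : ℝ[X])
    + C (n * (n + 2 * μ)) * (C (1 / 2) * (1 - X)) ^ k
    = C (k * (k + μ - 1 / 2)) * (C (1 / 2) * (1 - X)) ^ (k - 1) + 
      C ((n - k) * (n + 2 * μ + k)) * (C (1 / 2) * (1 - X)) ^ k := by
  apply Polynomial.funext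
  intro x
  rcases k with _ | _ | k
  · simp
  · simp
    ring
  · simp [derivative_pow, derivative_mul]
    rw [pow_succ _ (k+1), pow_succ _ k]
    ring


open Polynomial in
lemma geg_ode (μ : ℝ) (n : ℕ) : GODE μ n (geg μ n) := by
  have key : (1 - X ^ 2) * derivative (derivative (geg μ n)) - C (2 * μ + 1) * X * derivative (geg μ n)
    + C (n * (n + 2 * μ)) * (geg μ n) = ∑ k ∈ Finset.range (n + 1), C (gA μ n k) *
      (C (k * (k + μ - 1 / 2)) * (C (1 / 2) * (1 - X)) ^ (k - 1) + 
      C ((n - k) * (n + 2 * μ + k)) * (C (1 / 2) * (1 - X)) ^ k) := by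
    rw [geg, derivative_sum, derivative_sum, Finset.mul_sum, Finset.mul_sum, Finset.mul_sum,
      ← Finset.sum_sub_distrib, ← Finset.sum_add_distrib]
    refine Finset.sum_congr rfl fun k _ => ?_
    rw [← ode_pow, derivative_C_mul, derivative_C_mul]
    ring
  rw [GODE, key]
  simp only [mul_add]
  rw [Finset.sum_add_distrib, Finset.sum_range_succ', Finset.sum_range_succ _ n]
  simp only [Nat.cast_zero, zero_mul, C_0, mul_zero, add_zero, sub_self]
  rw [← Finset.sum_add_distrib]
  refine Finset.sum_eq_zero fun k hk => ?_
  obtain ⟨p, rfl⟩ : ∃ p, n = k + 1 + p := ⟨n - (k + 1), by have := Finset.mem_range.1 hk; omega⟩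
  have h := gA_rec μ k p
  simp only [Nat.add_sub_cancel]
  rw [← mul_assoc, ← mul_assoc, ← C_mul, ← C_mul, ← add_mul, ← C_add]
  convert zero_mul _
  rw [← C_0]
  congr 1
  push_cast
  linear_combination h

open Polynomial in
lemma gode_iter {μ : ℝ} {n : ℕ} {P : ℝ[X]} (h : GODE μ n P) (j : ℕ) :
    (1 - X ^ 2) * derivative^[j + 2] P - C (2 * μ + 1 + 2 * j) * X * derivative^[j + 1] P
    + C ((n - j) * (n + 2 * μ + j)) * derivative^[j] P = 0 := by
  induction j with
  | zero =>
    have : derivative^[2] P = derivative (derivative P) := rfl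
    simpa [GODE, this] using h
  | succ j ih =>
    have := congrArg derivative ih
    simp only [derivative_add, derivative_sub, derivative_mul, derivative_C, derivative_zero,
      derivative_X, derivative_one, derivative_X_pow, ← Function.iterate_succ_apply' (⇑derivative)] at this
    rw [← this]
    apply Polynomial.funext
    intro x
    simp
    ring

open Polynomial in
lemma gode_unique {μ : ℝ} (hμ : 0 < μ) {n : ℕ} {P : ℝ[X]} (h : GODE μ n P) (h1 : P.eval 1 = 0) :
    P = 0 := by
  have hd : ∀ j, (derivative^[j] P).eval 1 = 0 := by
    intro j
    induction j with
    | zero => simpa using h1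
    | succ j ih =>
      have := congrArg (eval 1) (gode_iter h j)
      simp only [eval_add, eval_sub, eval_mul, eval_C, ih, eval_X, eval_one, eval_pow, eval_zero] at this
      have h2 : (2 * μ + 1 + 2 * j) * eval 1 (derivative^[j + 1] P) = 0 := by linarith
      rcases mul_eq_zero.1 h2 with h3 | h3
      · exact absurd h3 (by positivity)
      · exact h3
  apply eq_zero_of_hasseDeriv_eq_zero P 1
  intro k
  have := congrArg (eval 1) (congrFun (factorial_smul_hasseDeriv (R := ℝ) k) P)
  rw [hd k] at this
  simpa [Nat.factorial_ne_zero] using this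

open Polynomial in
lemma gode_smul {μ : ℝ} {n : ℕ} {P : ℝ[X]} (h : GODE μ n P) (c : ℝ) : GODE μ n (C c * P) := by
  unfold GODE at *
  simp only [derivative_C_mul]
  linear_combination C c * h

open Polynomial in
lemma gode_sub {μ : ℝ} {n : ℕ} {P Q : ℝ[X]} (h : GODE μ n P) (h' : GODE μ n Q) : GODE μ n (P - Q) := by
  unfold GODE at *
  simp only [derivative_sub]
  linear_combination h - h'

lemma geg_one (μ : ℝ) (n : ℕ) : (geg μ n).eval 1 = poch (2 * μ) n / n.factorial := by
  rw [geg, Finset.sum_range_succ']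
  simp [Polynomial.eval_finsetSum, gA, poch_zero]

open Polynomial in
/-- two solutions of the ODE are proportional -/
lemma gode_eq {μ : ℝ} (hμ : 0 < μ) {n : ℕ} {P : ℝ[X]} (h : GODE μ n P) :
    C (poch (2 * μ) n / n.factorial) * P = C (P.eval 1) * geg μ n := by
  rw [← sub_eq_zero]
  apply gode_unique hμ (gode_sub (gode_smul h _) (gode_smul (geg_ode μ n) _))
  simp [geg_one]
  ring

open Polynomial in
lemma gode_neg {μ : ℝ} {n : ℕ} {P : ℝ[X]} (h : GODE μ n P) : GODE μ n (P.comp (-X)) := by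
  unfold GODE at *
  have := congrArg (fun q : ℝ[X] => q.comp (-X)) h
  simp at this
  simp [derivative_comp]
  linear_combination this

open Polynomial in
lemma geg_neg_one_sq {μ : ℝ} (hμ : 0 < μ) (n : ℕ) :
    (geg μ n).eval (-1) ^ 2 = (poch (2 * μ) n / n.factorial) ^ 2 := by
  have h := gode_eq hμ (gode_neg (geg_ode μ n))
  have h2 := congrArg (eval (-1)) h
  simp [geg_one] at h2
  linarith

open Polynomial in
lemma geg_bound {μ : ℝ} (hμ : 0 < μ) (n : ℕ) {s : ℝ} (hs : s ∈ Set.Icc (-1 : ℝ) 1) :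
    |(geg μ n).eval s| ≤ poch (2 * μ) n / n.factorial := by
  have hpos : 0 < poch (2 * μ) n / n.factorial := div_pos (poch_pos (by linarith) n) (by positivity)
  rcases Nat.eq_zero_or_pos n with rfl | hn
  · simp [geg, gA, poch_zero]
  set P := geg μ n
  have hn' : (0 : ℝ) < n := by exact_mod_cast hn
  set N : ℝ := n * (n + 2 * μ) with hN
  have hNp : 0 < N := by positivity
  set H : ℝ[X] := C N * P ^ 2 + (1 - X ^ 2) * derivative P ^ 2 with hH
  have hH' : derivative H = C (4 * μ) * X * derivative P ^ 2 := by
    have h := geg_ode μ n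
    unfold GODE at h
    have e : derivative H = C (4 * μ) * X * derivative P ^ 2 + 2 * derivative P * ((1 - X ^ 2) * derivative (derivative P) - C (2 * μ + 1) * X * derivative P
    + C (n * (n + 2 * μ)) * P) := by
      apply Polynomial.funext
      intro x
      simp [hH, derivative_pow, hN]
      ring
    rw [e, h]; simp
  have hle : ∀ v, (v = 1 ∨ v = -1) → P.eval v ^ 2 = (poch (2 * μ) n / n.factorial) ^ 2 := by
    rintro v (rfl | rfl)
    · rw [geg_one]
    · exact geg_neg_one_sq hμ n
  have hHs : H.eval s ≤ N * (poch (2 * μ) n / n.factorial) ^ 2 := by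
    rcases le_total 0 s with h0 | h0
    · have mono : MonotoneOn (fun x => H.eval x) (Set.Icc 0 1) := by
        apply monotoneOn_of_deriv_nonneg (convex_Icc 0 1) H.continuous.continuousOn
          H.differentiable.differentiableOn
        intro x hx
        rw [interior_Icc] at hx
        rw [Polynomial.deriv, hH']
        simp
        have := hx.1.le
        positivity
      have := mono (⟨h0, hs.2⟩ : s ∈ Set.Icc (0:ℝ) 1) (by simp) hs.2
      refine this.trans (le_of_eq ?_)
      simp [hH, hle 1 (Or.inl rfl)]
    · have mono : AntitoneOn (fun x => H.eval x) (Set.Icc (-1) 0) := by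
        apply antitoneOn_of_deriv_nonpos (convex_Icc (-1) 0) H.continuous.continuousOn
          H.differentiable.differentiableOn
        intro x hx
        rw [interior_Icc] at hx
        rw [Polynomial.deriv, hH']
        simp
        have := hx.2.le
        have h5 : 0 ≤ 4 * μ * (-x) * eval x (derivative P) ^ 2 := by
          have : 0 ≤ -x := by linarith
          positivity
        linarith
      have := mono (by simp : (-1 : ℝ) ∈ Set.Icc (-1:ℝ) 0) (⟨hs.1, h0⟩ : s ∈ Set.Icc (-1:ℝ) 0) hs.1
      refine this.trans (le_of_eq ?_)
      simp [hH, hle (-1) (Or.inr rfl)]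
  have h6 : N * P.eval s ^ 2 ≤ H.eval s := by
    simp [hH]
    have : 0 ≤ 1 - s ^ 2 := by nlinarith [hs.1, hs.2]
    positivity
  apply abs_le_of_sq_le_sq _ hpos.le
  exact le_of_mul_le_mul_left (h6.trans hHs) hNp


lemma gA_deriv (μ : ℝ) (n k : ℕ) :
    -(1 / 2) * (k + 1) * gA μ (n + 1) (k + 1) = 2 * μ * gA (μ + 1) n k := by
  rw [gA, gA, poch_succ_left, Nat.add_sub_add_right, Nat.factorial_succ]
  rw [show 2 * μ + 2 * ((k + 1 : ℕ) : ℝ) = 2 * (μ + 1) + 2 * k by push_cast; ring]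
  have f3 : (k.factorial : ℝ) ≠ 0 := by positivity
  have f4 : ((n - k).factorial : ℝ) ≠ 0 := by positivity
  generalize poch (2 * (μ + 1) + 2 * (k : ℝ)) (n - k) = a
  push_cast
  field_simp
  ring

open Polynomial in
lemma geg_deriv (μ : ℝ) (n : ℕ) :
    derivative (geg μ (n + 1)) = C (2 * μ) * geg (μ + 1) n := by
  rw [geg, Finset.sum_range_succ', derivative_add, derivative_sum, geg, Finset.mul_sum]
  simp only [pow_zero, mul_one, derivative_C, add_zero]
  refine Finset.sum_congr rfl fun k _ => ?_
  rw [← mul_assoc, ← C_mul, ← gA_deriv]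
  apply Polynomial.funext
  intro x
  simp [derivative_pow]
  ring

open Polynomial in
lemma geg_iter (μ : ℝ) (j m : ℕ) :
    derivative^[j] (geg μ (j + m)) = C (2 ^ j * poch μ j) * geg (μ + j) m := by
  induction j generalizing μ with
  | zero => simp [poch_zero]
  | succ j ih =>
    rw [Function.iterate_succ_apply, show j + 1 + m = (j + m) + 1 by ring, geg_deriv,
      iterate_derivative_C_mul, ih, poch_succ_left, ← mul_assoc, ← C_mul]
    push_cast
    rw [show μ + 1 + (j : ℝ) = μ + (j + 1) by ring]
    congr 2
    ring

open Polynomial in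
lemma geg_iter_zero (μ : ℝ) (n j : ℕ) (h : n < j) :
    derivative^[j] (geg μ n) = 0 := by
  obtain ⟨p, rfl⟩ : ∃ p, j = (p + 1) + n := ⟨j - n - 1, by omega⟩
  rw [Function.iterate_add_apply, show geg μ n = geg μ (n + 0) from rfl, geg_iter,
    iterate_derivative_C_mul, show geg (μ + n) 0 = C 1 by simp [geg, gA, poch_zero]]
  rw [Function.iterate_succ_apply, derivative_C]
  simp

open Polynomial in
lemma ode_prod (lam y : ℝ) (n k : ℕ) (P : ℝ[X])
    (hP : (1 - X ^ 2) * derivative (derivative P) - C (2 * lam + 1 + 4 * k) * X * derivative P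
      + C ((n - 2 * k) * (n + 2 * lam + 2 * k)) * P = 0) :
    (1 - X ^ 2) * derivative (derivative ((1 - X ^ 2) ^ k * P.comp (C y * X)))
      - C (2 * lam + 1) * X * derivative ((1 - X ^ 2) ^ k * P.comp (C y * X))
      + C (n * (n + 2 * lam)) * ((1 - X ^ 2) ^ k * P.comp (C y * X))
    = C (4 * k * (lam + k - 1 / 2)) * ((1 - X ^ 2) ^ (k - 1) * P.comp (C y * X))
      - C (1 - y ^ 2) * ((1 - X ^ 2) ^ k * (derivative (derivative P)).comp (C y * X)) := by
  apply Polynomial.funext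
  intro x
  have h := congrArg (eval (y * x)) hP
  simp only [eval_add, eval_sub, eval_mul, eval_C, eval_X, eval_one, eval_pow, eval_zero] at h
  rcases k with _ | _ | k
  · simp [derivative_comp]
    simp at h
    linear_combination h
  · simp [derivative_comp]
    simp at h
    linear_combination (1 - x ^ 2) * h
  · simp [derivative_comp, derivative_pow]
    push_cast at h
    rw [pow_succ _ (k+1), pow_succ _ k]
    linear_combination (1 - x ^ 2) ^ (k + 2) * h

/-- expansion coefficients -/
noncomputable def bC (lam : ℝ) (k : ℕ) : ℝ := 1 / (4 ^ k * poch (lam + 1 / 2) k * k.factorial)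

lemma bC_rec {lam : ℝ} (hl : 0 < lam) (k : ℕ) :
    bC lam (k + 1) * (4 * (k + 1) * (lam + k + 1 / 2)) = bC lam k := by
  have := (poch_pos (show 0 < lam + 1 / 2 by linarith) k).ne'
  have f3 : (k.factorial : ℝ) ≠ 0 := by positivity
  have h3 : lam + 1 / 2 + k ≠ 0 := by positivity
  rw [bC, bC, poch_succ, Nat.factorial_succ, pow_succ,
    show lam + k + 1 / 2 = lam + 1 / 2 + (k : ℝ) by ring]
  push_cast
  generalize lam + 1 / 2 + (k : ℝ) = z at *
  field_simp

open Polynomial in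
lemma prod_ode {lam : ℝ} (hl : 0 < lam) (y : ℝ) (n : ℕ) :
    GODE lam n (∑ k ∈ Finset.range (n + 1), C (bC lam k * (1 - y ^ 2) ^ k) *
      ((1 - X ^ 2) ^ k * (derivative^[2 * k] (geg lam n)).comp (C y * X))) := by
  rw [GODE, derivative_sum, derivative_sum, Finset.mul_sum, Finset.mul_sum, Finset.mul_sum,
      ← Finset.sum_sub_distrib, ← Finset.sum_add_distrib]
  have key : ∀ k ∈ Finset.range (n + 1), (1 - X ^ 2) * derivative (derivative (C (bC lam k * (1 - y ^ 2) ^ k) *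
      ((1 - X ^ 2) ^ k * (derivative^[2 * k] (geg lam n)).comp (C y * X))))
      - C (2 * lam + 1) * X * derivative (C (bC lam k * (1 - y ^ 2) ^ k) *
      ((1 - X ^ 2) ^ k * (derivative^[2 * k] (geg lam n)).comp (C y * X)))
      + C (n * (n + 2 * lam)) * (C (bC lam k * (1 - y ^ 2) ^ k) *
      ((1 - X ^ 2) ^ k * (derivative^[2 * k] (geg lam n)).comp (C y * X)))
      = C (bC lam k * (1 - y ^ 2) ^ k * (4 * k * (lam + k - 1 / 2))) *
          ((1 - X ^ 2) ^ (k - 1) * (derivative^[2 * k] (geg lam n)).comp (C y * X))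
        - C (bC lam k * (1 - y ^ 2) ^ (k + 1)) *
          ((1 - X ^ 2) ^ k * (derivative^[2 * (k + 1)] (geg lam n)).comp (C y * X)) := by
    intro k _
    have h := gode_iter (geg_ode lam n) (2 * k)
    rw [Function.iterate_succ_apply', Function.iterate_succ_apply'] at h
    have h2 := ode_prod lam y n k (derivative^[2 * k] (geg lam n)) (by
      rw [← h]; push_cast
      rw [show 2 * lam + 1 + 4 * (k : ℝ) = 2 * lam + 1 + 2 * (2 * k) by ring])
    rw [derivative_C_mul, derivative_C_mul, pow_succ (1 - y ^ 2) k]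
    rw [show 2 * (k + 1) = 2 * k + 1 + 1 by ring, Function.iterate_succ_apply',
      Function.iterate_succ_apply']
    simp only [C_mul] at h2 ⊢
    linear_combination C (bC lam k) * C ((1 - y ^ 2) ^ k) * h2
  rw [Finset.sum_congr rfl key, Finset.sum_sub_distrib, Finset.sum_range_succ',
    Finset.sum_range_succ _ n]
  rw [geg_iter_zero lam n (2 * (n + 1)) (by omega)]
  simp only [Nat.cast_zero, mul_zero, zero_mul, C_0, add_zero, zero_comp]
  rw [sub_eq_zero]
  refine Finset.sum_congr rfl fun k _ => ?_
  rw [Nat.add_sub_cancel, ← bC_rec hl k]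
  congr 2
  push_cast
  ring

/-- product formula -/
lemma geg_mul {lam : ℝ} (hl : 0 < lam) (x y : ℝ) (n : ℕ) :
    n.factorial / poch (2 * lam) n * ((geg lam n).eval x * (geg lam n).eval y) =
      ∑ k ∈ Finset.range (n + 1), if 2 * k ≤ n then
        poch lam (2 * k) / (poch (lam + 1 / 2) k * k.factorial) *
          ((1 - x ^ 2) * (1 - y ^ 2)) ^ k * (geg (lam + 2 * k) (n - 2 * k)).eval (x * y) else 0 := by
  have h := congrArg (Polynomial.eval x) (gode_eq hl (prod_ode hl y n))
  have hp := (poch_pos (show 0 < 2 * lam by linarith) n).ne'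
  have f3 : (n.factorial : ℝ) ≠ 0 := by positivity
  have h0 : Polynomial.eval 1 (∑ k ∈ Finset.range (n + 1), Polynomial.C (bC lam k * (1 - y ^ 2) ^ k) *
      ((1 - Polynomial.X ^ 2) ^ k * (Polynomial.derivative^[2 * k] (geg lam n)).comp (Polynomial.C y * Polynomial.X)))
      = (geg lam n).eval y := by
    rw [Finset.sum_range_succ']
    simp [Polynomial.eval_finsetSum, bC, poch_zero]
  rw [h0] at h
  simp only [Polynomial.eval_mul, Polynomial.eval_C] at h
  rw [mul_comm (Polynomial.eval x _), ← h, ← mul_assoc]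
  rw [show (n.factorial / poch (2 * lam) n) * (poch (2 * lam) n / n.factorial) = 1 by field_simp, one_mul]
  rw [Polynomial.eval_finsetSum]
  refine Finset.sum_congr rfl fun k _ => ?_
  split_ifs with hk
  · obtain ⟨m, rfl⟩ := Nat.exists_eq_add_of_le hk
    rw [geg_iter, Nat.add_sub_cancel_left, pow_mul]
    have := (poch_pos (show 0 < lam + 1 / 2 by linarith) k).ne'
    have f3 : (k.factorial : ℝ) ≠ 0 := by positivity
    simp [bC, mul_pow]
    rw [mul_comm y x]
    norm_num
    field_simp
  · rw [geg_iter_zero _ _ _ (by omega)]; simp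


lemma hasSum_cg {f g : ℕ → ℝ} {a b : ℝ} (h : HasSum f a) (hf : ∀ n, g n = f n) (hab : b = a) :
    HasSum g b := by
  rw [hab, funext hf]; exact h

lemma ring_choose_poch (a : ℝ) (n : ℕ) : Ring.choose (a + n - 1) n = poch a n / n.factorial := by
  have h := Ring.factorial_nsmul_multichoose_eq_ascPochhammer a n
  have f3 : (n.factorial : ℝ) ≠ 0 := by positivity
  rw [Ring.choose, show a + n - 1 - n + 1 = a by ring, eq_div_iff f3, mul_comm, ← nsmul_eq_mul, h,
    poch, ← Polynomial.ascPochhammer_smeval_eq_eval]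

lemma hasSum_binom (a : ℝ) {z : ℝ} (hz : |z| < 1) :
    HasSum (fun k : ℕ => poch a k / k.factorial * z ^ k) ((1 - z) ^ (-a)) := by
  have h := (Real.one_div_one_sub_rpow_hasFPowerSeriesOnBall_zero a).hasSum (y := z) (by
    simpa [enorm_eq_nnnorm, ← NNReal.coe_lt_coe] using hz)
  simp only [FormalMultilinearSeries.ofScalars_apply_eq, zero_add, smul_eq_mul,
    ring_choose_poch] at h
  rwa [one_div, ← Real.rpow_neg (by linarith [(abs_lt.1 hz).2])] at h

lemma hasSum_poisson1 {c : ℝ} (hc : 0 < c) {r : ℝ} (hr : |r| < 1) :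
    HasSum (fun p : ℕ => (2 * p + c) / c * (poch c p / p.factorial) * r ^ p)
      ((1 + r) * (1 - r) ^ (-(c + 1))) := by
  have h1 := hasSum_binom c hr
  have h2 := (hasSum_binom (c + 1) hr).mul_left (2 * r)
  have h3 : HasSum (fun p : ℕ => 2 * p / c * (poch c p / p.factorial) * r ^ p)
      (2 * r * (1 - r) ^ (-(c + 1))) := by
    rw [← hasSum_nat_add_iff' 1]
    simp only [Finset.sum_range_one, Nat.cast_zero, mul_zero, zero_div, zero_mul, sub_zero]
    refine hasSum_cg h2 (fun p => ?_) rfl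
    rw [poch_succ_left, Nat.factorial_succ]
    have f3 : (p.factorial : ℝ) ≠ 0 := by positivity
    push_cast
    field_simp
    ring
  refine hasSum_cg (h3.add h1) (fun p => ?_) ?_
  · field_simp
  · have : 0 < 1 - r := by linarith [(abs_lt.1 hr).2]
    rw [show -c = -(c + 1) + 1 by ring, Real.rpow_add_one this.ne']
    ring

lemma regroup (d : ℕ) (hd : 0 < d) (F M : ℕ → ℕ → ℝ) (G g : ℕ → ℝ) (T : ℝ)
    (hM : ∀ k m, |F k m| ≤ M k m) (hG : ∀ k, HasSum (M k) (G k)) (hGs : Summable G)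
    (hF : ∀ k, HasSum (F k) (g k)) (hg : HasSum g T) :
    HasSum (fun n => ∑ k ∈ Finset.range (n + 1), if d * k ≤ n then F k (n - d * k) else 0) T := by
  have s1 : Summable (fun p : ℕ × ℕ => M p.1 p.2) := by
    rw [summable_prod_of_nonneg (fun p => (abs_nonneg _).trans (hM p.1 p.2))]
    exact ⟨fun k => (hG k).summable, hGs.congr fun k => (hG k).tsum_eq.symm⟩
  have s2 : Summable (fun p : ℕ × ℕ => F p.1 p.2) :=
    Summable.of_norm_bounded s1 fun p => hM p.1 p.2
  have s3 := s2.hasSum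
  have s4 := s3.prod_fiberwise (fun k => hF k)
  rw [s4.unique hg] at s3
  let e : ℕ × ℕ → ℕ × ℕ := fun p => (p.2 + d * p.1, p.1)
  let E : ℕ × ℕ → ℝ := fun q => if d * q.2 ≤ q.1 then F q.2 (q.1 - d * q.2) else 0
  have hinj : Function.Injective e := by
    rintro ⟨a, b⟩ ⟨a', b'⟩ h
    simp only [e, Prod.mk.injEq] at h
    obtain ⟨h1, rfl⟩ := h
    simpa using h1
  have hEe : E ∘ e = fun p : ℕ × ℕ => F p.1 p.2 := by
    ext ⟨k, m⟩
    simp [E, e]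
  have s5 : HasSum E T := by
    rw [← hinj.hasSum_iff, hEe]
    · exact s3
    · rintro ⟨n, k⟩ hnk
      simp only [E]
      split_ifs with h
      · exact absurd ⟨(k, n - d * k), by simp [e, Nat.sub_add_cancel h]⟩ hnk
      · rfl
  refine s5.prod_fiberwise (fun n => ?_)
  apply hasSum_sum_of_ne_finset_zero
  intro k hk
  simp only [E]
  have : ¬ (k ≤ n) := by simpa [Nat.lt_succ_iff] using hk
  rw [if_neg]
  nlinarith

lemma poisson_small {μ : ℝ} (hμ : 0 < μ) {r : ℝ} (hr : 0 < r) (hr' : r < 1 / 10) {s : ℝ}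
    (hs : s ∈ Set.Icc (-1 : ℝ) 1) :
    HasSum (fun m : ℕ => (m + μ) / μ * (geg μ m).eval s * r ^ m)
      ((1 - r ^ 2) * (1 - 2 * r * s + r ^ 2) ^ (-(μ + 1))) := by
  set u : ℝ := (1 - s) / 2 with hu
  have hu0 : 0 ≤ u := by linarith [hs.2]
  have hu1 : u ≤ 1 := by linarith [hs.1]
  have hr1 : 0 < 1 - r := by linarith
  have hra : |r| < 1 := by rw [abs_of_pos hr]; linarith
  set z : ℝ := 4 * r * u / (1 - r) ^ 2 with hz
  have hz0 : 0 ≤ z := by positivity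
  have hz1 : z < 1 := by
    rw [hz, div_lt_one (by positivity)]
    nlinarith
  have hpw : ∀ k : ℕ, (1 - r) ^ (-((2 * μ + 2 * k) + 1)) = (1 - r) ^ (-(2 * μ + 1)) / ((1 - r) ^ 2) ^ k := by
    intro k
    rw [show -((2 * μ + 2 * k) + 1) = -(2 * μ + 1) - ((2 * k : ℕ) : ℝ) by push_cast; ring,
      Real.rpow_sub hr1, Real.rpow_natCast, pow_mul]
  have aux : ∀ v : ℝ, ∀ k : ℕ, poch (μ + 1) k / k.factorial * (4 * v * r) ^ k *
        ((1 + r) * (1 - r) ^ (-((2 * μ + 2 * k) + 1))) = 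
        (1 + r) * (1 - r) ^ (-(2 * μ + 1)) * (poch (μ + 1) k / k.factorial * (4 * r * v / (1 - r) ^ 2) ^ k) := by
    intro v k
    rw [hpw, div_pow]
    have f3 : (k.factorial : ℝ) ≠ 0 := by positivity
    field_simp
  have hz' : 4 * r * (-u) / (1 - r) ^ 2 = -z := by rw [hz]; ring
  have hpp := fun k : ℕ => poch_pos (show 0 < μ + 1 by linarith) k
  have hcp := fun k p : ℕ => poch_pos (show 0 < 2 * μ + 2 * (k : ℝ) by positivity) p
  have main := regroup 1 one_pos
    (fun k p => poch (μ + 1) k / k.factorial * (4 * (-u) * r) ^ k *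
      ((2 * p + (2 * μ + 2 * k)) / (2 * μ + 2 * k) * (poch (2 * μ + 2 * k) p / p.factorial) * r ^ p))
    (fun k p => poch (μ + 1) k / k.factorial * (4 * u * r) ^ k *
      ((2 * p + (2 * μ + 2 * k)) / (2 * μ + 2 * k) * (poch (2 * μ + 2 * k) p / p.factorial) * r ^ p))
    (fun k => poch (μ + 1) k / k.factorial * (4 * u * r) ^ k *
        ((1 + r) * (1 - r) ^ (-((2 * μ + 2 * k) + 1))))
    (fun k => poch (μ + 1) k / k.factorial * (4 * (-u) * r) ^ k *
        ((1 + r) * (1 - r) ^ (-((2 * μ + 2 * k) + 1))))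
    ((1 - r ^ 2) * (1 - 2 * r * s + r ^ 2) ^ (-(μ + 1)))
    (by
      intro k p
      apply le_of_eq
      have := hpp k
      have := hcp k p
      rw [abs_mul, abs_mul, abs_pow]
      congr 1
      · congr 1
        · exact abs_of_pos (by positivity)
        · rw [show 4 * -u * r = -(4 * u * r) by ring, abs_neg, abs_of_nonneg (by positivity)]
      · exact abs_of_pos (by positivity))
    (fun k => (hasSum_poisson1 (by positivity) hra).mul_left _)
    (by
      simp only [aux]
      exact ((hasSum_binom (μ + 1) (z := z) (by rwa [abs_of_nonneg hz0])).summable).mul_left _)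
    (fun k => (hasSum_poisson1 (by positivity) hra).mul_left _)
    (by
      simp only [aux, hz']
      refine hasSum_cg ((hasSum_binom (μ + 1) (z := -z) (by rwa [abs_neg, abs_of_nonneg hz0])).mul_left _)
        (fun k => rfl) ?_
      have e : 1 - 2 * r * s + r ^ 2 = (1 - r) ^ 2 * (1 - -z) := by
        rw [hz, hu]; field_simp; ring
      rw [e, Real.mul_rpow (by positivity) (by linarith), ← Real.rpow_natCast (1 - r) 2,
        ← Real.rpow_mul hr1.le, show (2 : ℕ) * (-(μ + 1)) = -(2 * μ + 1) - 1 by push_cast; ring,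
        Real.rpow_sub_one hr1.ne']
      field_simp
      ring)
  refine hasSum_cg main (fun m => ?_) rfl
  rw [geg, Polynomial.eval_finsetSum, Finset.mul_sum, Finset.sum_mul]
  refine Finset.sum_congr rfl fun k hk => ?_
  have hk' : k ≤ m := by simpa [Nat.lt_succ_iff] using hk
  obtain ⟨p, rfl⟩ := Nat.exists_eq_add_of_le hk'
  rw [if_pos (by omega), one_mul, Nat.add_sub_cancel_left, gA, Nat.add_sub_cancel_left]
  have h5 : μ * poch (μ + 1) k = poch μ k * (μ + k) := by rw [← poch_succ_left, poch_succ]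
  have h6 : poch (μ + 1) k = poch μ k * (μ + k) / μ := by field_simp; linarith
  rw [h6]
  simp only [Polynomial.eval_mul, Polynomial.eval_C, Polynomial.eval_pow, Polynomial.eval_sub,
    Polynomial.eval_one, Polynomial.eval_X]
  rw [show 1 / 2 * (1 - s) = u by rw [hu]; ring, show 4 * (-u) * r = (-4) * (u * r) by ring,
    mul_pow (-4 : ℝ), mul_pow, pow_add]
  have f3 : (k.factorial : ℝ) ≠ 0 := by positivity
  have f4 : (p.factorial : ℝ) ≠ 0 := by positivity
  have f5 : 2 * μ + 2 * (k : ℝ) ≠ 0 := by positivity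
  have f6 : μ + (k : ℝ) ≠ 0 := by positivity
  generalize poch (2 * μ + 2 * (k : ℝ)) p = b
  rw [show 2 * μ + 2 * (k : ℝ) = 2 * (μ + k) by ring]
  push_cast
  field_simp
  ring


/-- hypergeometric coefficients -/
noncomputable def qC (lam : ℝ) (k : ℕ) : ℝ :=
  poch ((lam + 1) / 2) k * poch ((lam + 2) / 2) k / (poch (lam + 1 / 2) k * k.factorial)

lemma qC_pos {lam : ℝ} (hl : 0 < lam) (k : ℕ) : 0 < qC lam k := by
  have h1 := poch_pos (show 0 < (lam + 1) / 2 by linarith) k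
  have h2 := poch_pos (show 0 < (lam + 2) / 2 by linarith) k
  have h3 := poch_pos (show 0 < lam + 1 / 2 by linarith) k
  unfold qC
  positivity

lemma qC_mul (lam : ℝ) (k : ℕ) :
    qC lam k * 4 ^ k = poch (lam + 1) (2 * k) / (poch (lam + 1 / 2) k * k.factorial) := by
  have h := poch_double ((lam + 1) / 2) k
  rw [show 2 * ((lam + 1) / 2) = lam + 1 by ring,
    show (lam + 1) / 2 + 1 / 2 = (lam + 2) / 2 by ring] at h
  rw [qC, h]
  ring

lemma tendsto_ratio (a b : ℝ) :
    Filter.Tendsto (fun k : ℕ => (a + k) / (b + k)) Filter.atTop (nhds 1) := by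
  have h := tendsto_add_mul_div_add_mul_atTop_nhds a b 1 (d := 1) one_ne_zero
  simpa using h

lemma qC_summable {lam : ℝ} (hl : 0 < lam) {z : ℝ} (hz : |z| < 1) :
    Summable (fun k => |qC lam k * z ^ k|) := by
  rw [summable_abs_iff]
  rcases eq_or_ne z 0 with rfl | hz0
  · apply summable_of_ne_finset_zero (s := {0})
    intro k hk
    rw [zero_pow (by simpa using hk), mul_zero]
  apply summable_of_ratio_test_tendsto_lt_one hz
  · exact Filter.Eventually.of_forall fun k => mul_ne_zero (qC_pos hl k).ne' (pow_ne_zero _ hz0)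
  · have h := ((tendsto_ratio ((lam + 1) / 2) (lam + 1 / 2)).mul
      (tendsto_ratio ((lam + 2) / 2) 1)).mul_const |z|
    rw [one_mul, one_mul] at h
    refine h.congr fun k => ?_
    rw [Real.norm_eq_abs, Real.norm_eq_abs, ← abs_div, qC, qC, poch_succ, poch_succ, poch_succ,
      Nat.factorial_succ, pow_succ]
    have h1 := poch_pos (show 0 < (lam + 1) / 2 by linarith) k
    have h2 := poch_pos (show 0 < (lam + 2) / 2 by linarith) k
    have h3 := poch_pos (show 0 < lam + 1 / 2 by linarith) k
    have f : (0 : ℝ) < k.factorial := by positivity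
    generalize poch ((lam + 1) / 2) k = A at *
    generalize poch ((lam + 2) / 2) k = B at *
    generalize poch (lam + 1 / 2) k = D at *
    have e1 : 0 < (lam + 1) / 2 + k := by positivity
    have e2 : 0 < (lam + 2) / 2 + k := by positivity
    have e3 : 0 < lam + 1 / 2 + k := by positivity
    have e4 : (0 : ℝ) < 1 + k := by positivity
    rw [← abs_of_pos (show 0 < ((lam + 1) / 2 + k) / (lam + 1 / 2 + k) * (((lam + 2) / 2 + k) / (1 + k))
      by positivity), ← abs_mul]
    push_cast
    rw [add_comm (k : ℝ) 1]
    generalize (lam + 1) / 2 + (k : ℝ) = E1 at *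
    generalize (lam + 2) / 2 + (k : ℝ) = E2 at *
    generalize lam + 1 / 2 + (k : ℝ) = E3 at *
    congr 1
    field_simp

lemma analytic_series (a : ℕ → ℝ) (h : ∀ z : ℝ, |z| < 1 → Summable (fun n => |a n * z ^ n|)) :
    AnalyticOnNhd ℝ (fun z => ∑' n, a n * z ^ n) (Metric.ball 0 1) := by
  set p := FormalMultilinearSeries.ofScalars ℝ a with hp
  have hr : 1 ≤ p.radius := by
    refine ENNReal.le_of_forall_nnreal_lt fun r hr => ?_
    apply p.le_radius_of_summable
    have hr1 : (r : ℝ) < 1 := by exact_mod_cast hr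
    have := h r (by rwa [NNReal.abs_eq])
    refine this.congr fun n => ?_
    rw [hp, FormalMultilinearSeries.ofScalars_norm, abs_mul, abs_pow, NNReal.abs_eq,
      Real.norm_eq_abs]
  have hs : (fun z => ∑' n, a n * z ^ n) = p.sum := by
    ext z
    simp [FormalMultilinearSeries.sum, hp, smul_eq_mul, mul_comm]
  rw [hs]
  intro z hz
  apply (p.hasFPowerSeriesOnBall (lt_of_lt_of_le one_pos hr)).analyticAt_of_mem
  refine Metric.eball_subset_eball hr ?_
  simpa [enorm_eq_nnnorm, ← NNReal.coe_lt_coe] using hz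

/-- the terms of the left side -/
noncomputable def lC (lam x y : ℝ) (n : ℕ) : ℝ :=
  (n + lam) / lam * (n.factorial / poch (2 * lam) n * ((geg lam n).eval x * (geg lam n).eval y))

lemma lC_summable {lam : ℝ} (hl : 0 < lam) {x y : ℝ} (hx : x ∈ Set.Icc (-1 : ℝ) 1)
    (hy : y ∈ Set.Icc (-1 : ℝ) 1) {r : ℝ} (hr : |r| < 1) :
    Summable (fun n => |lC lam x y n * r ^ n|) := by
  have h := (hasSum_poisson1 (show 0 < 2 * lam by linarith) (r := |r|) (by rwa [abs_abs])).summable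
  refine Summable.of_nonneg_of_le (fun n => abs_nonneg _) (fun n => ?_) h
  have hp := poch_pos (show 0 < 2 * lam by linarith) n
  have f : (0 : ℝ) < n.factorial := by positivity
  rw [abs_mul, abs_pow]
  refine mul_le_mul_of_nonneg_right ?_ (by positivity)
  rw [lC, abs_mul, abs_mul, abs_mul, abs_of_pos (show 0 < (n + lam) / lam by positivity),
    abs_of_pos (show 0 < n.factorial / poch (2 * lam) n by positivity),
    show (2 * n + 2 * lam) / (2 * lam) = (n + lam) / lam by field_simp]
  refine mul_le_mul_of_nonneg_left ?_ (by positivity)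
  have h1 := mul_le_mul (geg_bound hl n hx) (geg_bound hl n hy) (abs_nonneg _) (by positivity)
  calc _ ≤ n.factorial / poch (2 * lam) n * (poch (2 * lam) n / n.factorial * (poch (2 * lam) n / n.factorial)) :=
        mul_le_mul_of_nonneg_left h1 (by positivity)
    _ = _ := by field_simp

lemma term_conv (lam w r D : ℝ) (hD : 0 < D) (k : ℕ) :
    poch (lam + 1) (2 * k) / (poch (lam + 1 / 2) k * k.factorial) * (w * r ^ 2) ^ k *
      ((1 - r ^ 2) * D ^ (-(lam + 2 * k + 1))) =
    (1 - r ^ 2) * D ^ (-(lam + 1)) * (qC lam k * (4 * w * r ^ 2 / D ^ 2) ^ k) := by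
  rw [← qC_mul, show -(lam + 2 * k + 1) = -(lam + 1) - ((2 * k : ℕ) : ℝ) by push_cast; ring,
      Real.rpow_sub hD, Real.rpow_natCast, pow_mul, div_pow, show 4 * w * r ^ 2 = 4 * (w * r ^ 2) by ring,
      mul_pow 4]
  field_simp

lemma small_identity {lam : ℝ} (hl : 0 < lam) {x y : ℝ} (hx : x ∈ Set.Ioo (-1 : ℝ) 1)
    (hy : y ∈ Set.Ioo (-1 : ℝ) 1) {r : ℝ} (hr : 0 < r) (hr' : r < 1 / 10) 
    (hD : 0 < 1 - 2 * r * (x * y) + r ^ 2)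
    (hz : |4 * ((1 - x ^ 2) * (1 - y ^ 2)) * r ^ 2 / (1 - 2 * r * (x * y) + r ^ 2) ^ 2| < 1) :
    HasSum (fun n => lC lam x y n * r ^ n)
      ((1 - r ^ 2) * (1 - 2 * r * (x * y) + r ^ 2) ^ (-(lam + 1)) *
        ∑' k, qC lam k * (4 * ((1 - x ^ 2) * (1 - y ^ 2)) * r ^ 2 / (1 - 2 * r * (x * y) + r ^ 2) ^ 2) ^ k) := by
  have hs : x * y ∈ Set.Icc (-1 : ℝ) 1 := by
    have : |x * y| ≤ 1 := by
      rw [abs_mul]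
      exact mul_le_one₀ (abs_le.2 ⟨hx.1.le, hx.2.le⟩) (abs_nonneg _) (abs_le.2 ⟨hy.1.le, hy.2.le⟩)
    exact abs_le.1 this
  have hx2 : 0 < 1 - x ^ 2 := by nlinarith [hx.1, hx.2]
  have hy2 : 0 < 1 - y ^ 2 := by nlinarith [hy.1, hy.2]
  have hw1 : (1 - x ^ 2) * (1 - y ^ 2) ≤ 1 := by nlinarith [sq_nonneg x, sq_nonneg y]
  have hw0 : 0 < (1 - x ^ 2) * (1 - y ^ 2) := by positivity
  have hgm := fun n => geg_mul hl x y n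
  generalize (1 - x ^ 2) * (1 - y ^ 2) = w at *
  have hep : ∀ k : ℕ, 0 < poch (lam + 1) (2 * k) / (poch (lam + 1 / 2) k * k.factorial) := by
    intro k
    have h1 := poch_pos (show 0 < lam + 1 by linarith) (2 * k)
    have h3 := poch_pos (show 0 < lam + 1 / 2 by linarith) k
    positivity
  have hD1 : 0 < 1 - 2 * r * 1 + r ^ 2 := by nlinarith
  have main := regroup 2 two_pos
    (fun k m => poch (lam + 1) (2 * k) / (poch (lam + 1 / 2) k * k.factorial) * (w * r ^ 2) ^ k *
      ((m + (lam + 2 * k)) / (lam + 2 * k) * (geg (lam + 2 * k) m).eval (x * y) * r ^ m))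
    (fun k m => poch (lam + 1) (2 * k) / (poch (lam + 1 / 2) k * k.factorial) * (w * r ^ 2) ^ k *
      ((m + (lam + 2 * k)) / (lam + 2 * k) * (geg (lam + 2 * k) m).eval 1 * r ^ m))
    (fun k => poch (lam + 1) (2 * k) / (poch (lam + 1 / 2) k * k.factorial) * (w * r ^ 2) ^ k *
      ((1 - r ^ 2) * (1 - 2 * r * 1 + r ^ 2) ^ (-(lam + 2 * k + 1))))
    (fun k => poch (lam + 1) (2 * k) / (poch (lam + 1 / 2) k * k.factorial) * (w * r ^ 2) ^ k *
      ((1 - r ^ 2) * (1 - 2 * r * (x * y) + r ^ 2) ^ (-(lam + 2 * k + 1))))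
    ((1 - r ^ 2) * (1 - 2 * r * (x * y) + r ^ 2) ^ (-(lam + 1)) *
        ∑' k, qC lam k * (4 * w * r ^ 2 / (1 - 2 * r * (x * y) + r ^ 2) ^ 2) ^ k)
    (by
      intro k m
      have := hep k
      rw [abs_mul, abs_of_pos (show 0 < poch (lam + 1) (2 * k) / (poch (lam + 1 / 2) k * k.factorial) * (w * r ^ 2) ^ k by positivity),
        abs_mul, abs_mul, abs_of_pos (show 0 < r ^ m by positivity),
        abs_of_pos (show 0 < (m + (lam + 2 * k)) / (lam + 2 * k) by positivity), geg_one]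
      gcongr
      exact geg_bound (by positivity) m hs)
    (fun k => (poisson_small (by positivity) hr hr' (by simp)).mul_left _)
    (by
      simp only [term_conv lam w r _ hD1]
      refine ((summable_abs_iff.1 (qC_summable hl ?_))).mul_left _
      rw [abs_of_pos (by positivity), div_lt_one (by positivity)]
      have h1 : 4 * w * r ^ 2 ≤ (2 * r) ^ 2 := by nlinarith [sq_nonneg r]
      have h2 : (2 * r) ^ 2 < (1 - 2 * r * 1 + r ^ 2) ^ 2 := by
        apply pow_lt_pow_left₀ _ (by positivity) (by norm_num)
        nlinarith
      linarith)
    (fun k => (poisson_small (by positivity) hr hr' hs).mul_left _)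
    (by
      simp only [term_conv lam w r _ hD]
      exact ((summable_abs_iff.1 (qC_summable hl hz))).hasSum.mul_left _)
  refine hasSum_cg main (fun n => ?_) rfl
  rw [lC, hgm, Finset.mul_sum, Finset.sum_mul]
  refine Finset.sum_congr rfl fun k hk => ?_
  split_ifs with h
  · obtain ⟨m, rfl⟩ := Nat.exists_eq_add_of_le h
    rw [Nat.add_sub_cancel_left]
    have h5 : lam * poch (lam + 1) (2 * k) = poch lam (2 * k) * (lam + 2 * k) := by
      rw [← poch_succ_left, poch_succ]; push_cast; ring
    have h6 : poch (lam + 1) (2 * k) = poch lam (2 * k) * (lam + 2 * k) / lam := by field_simp; linarith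
    rw [h6, pow_add, mul_pow, pow_mul]
    have h3 := (poch_pos (show 0 < lam + 1 / 2 by linarith) k).ne'
    have f3 : (k.factorial : ℝ) ≠ 0 := by positivity
    have f6 : lam + 2 * (k : ℝ) ≠ 0 := by positivity
    generalize Polynomial.eval (x * y) (geg (lam + 2 * (k : ℝ)) m) = g
    generalize poch (lam + 1 / 2) k = c at *
    push_cast
    field_simp
    ring
  · simp

lemma D_facts {x y : ℝ} (hx : x ∈ Set.Ioo (-1 : ℝ) 1)
    (hy : y ∈ Set.Ioo (-1 : ℝ) 1) {r : ℝ} (hr : 0 < r) (hr' : r < 1) :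
    0 < 1 - 2 * r * (x * y) + r ^ 2 ∧
    |4 * ((1 - x ^ 2) * (1 - y ^ 2)) * r ^ 2 / (1 - 2 * r * (x * y) + r ^ 2) ^ 2| < 1 := by
  have hx2 : 0 < 1 - x ^ 2 := by nlinarith [hx.1, hx.2]
  have hy2 : 0 < 1 - y ^ 2 := by nlinarith [hy.1, hy.2]
  have h1 : r * (2 - x ^ 2 - y ^ 2) < 1 - 2 * r * (x * y) + r ^ 2 := by
    nlinarith [mul_nonneg hr.le (sq_nonneg (x - y)), pow_pos (sub_pos.2 hr') 2]
  have h0 : 0 < r * (2 - x ^ 2 - y ^ 2) := mul_pos hr (by linarith)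
  have hD := h0.trans h1
  refine ⟨hD, ?_⟩
  rw [abs_of_pos (by positivity), div_lt_one (by positivity)]
  refine lt_of_le_of_lt ?_ (pow_lt_pow_left₀ h1 h0.le (by norm_num : 2 ≠ 0))
  have : 4 * ((1 - x ^ 2) * (1 - y ^ 2)) ≤ (2 - x ^ 2 - y ^ 2) ^ 2 := by
    nlinarith [sq_nonneg (x ^ 2 - y ^ 2)]
  rw [mul_pow, mul_comm]
  exact mul_le_mul_of_nonneg_left this (by positivity)

lemma full_identity {lam : ℝ} (hl : 0 < lam) {x y : ℝ} (hx : x ∈ Set.Ioo (-1 : ℝ) 1)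
    (hy : y ∈ Set.Ioo (-1 : ℝ) 1) {r : ℝ} (hr : 0 < r) (hr' : r < 1) :
    ∑' n, lC lam x y n * r ^ n = 
      ((1 - r ^ 2) * (1 - 2 * r * (x * y) + r ^ 2) ^ (-(lam + 1)) *
        ∑' k, qC lam k * (4 * ((1 - x ^ 2) * (1 - y ^ 2)) * r ^ 2 / (1 - 2 * r * (x * y) + r ^ 2) ^ 2) ^ k) := by
  have hx' := Set.Ioo_subset_Icc_self hx
  have hy' := Set.Ioo_subset_Icc_self hy
  have a1 : AnalyticOnNhd ℝ (fun r => ∑' n, lC lam x y n * r ^ n) (Set.Ioo 0 1) := by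
    refine (analytic_series _ (fun z hz => lC_summable hl hx' hy' hz)).mono ?_
    intro z hz
    simpa [abs_lt] using ⟨by linarith [hz.1], hz.2⟩
  have a2 : AnalyticOnNhd ℝ (fun r => ((1 - r ^ 2) * (1 - 2 * r * (x * y) + r ^ 2) ^ (-(lam + 1)) *
        ∑' k, qC lam k * (4 * ((1 - x ^ 2) * (1 - y ^ 2)) * r ^ 2 / (1 - 2 * r * (x * y) + r ^ 2) ^ 2) ^ k))
        (Set.Ioo 0 1) := by
    intro z hz
    obtain ⟨hD, hz1⟩ := D_facts hx hy hz.1 hz.2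
    have hDa : AnalyticAt ℝ (fun r => 1 - 2 * r * (x * y) + r ^ 2) z := by fun_prop
    have hZa : AnalyticAt ℝ (fun r => 4 * ((1 - x ^ 2) * (1 - y ^ 2)) * r ^ 2 / (1 - 2 * r * (x * y) + r ^ 2) ^ 2) z := by
      refine AnalyticAt.div (by fun_prop) (hDa.pow 2) (by positivity)
    have hPh := analytic_series _ (fun z hz => qC_summable hl hz) _ (show _ ∈ Metric.ball (0 : ℝ) 1 by
      simpa only [Metric.mem_ball, dist_zero_right, Real.norm_eq_abs] using hz1)
    refine AnalyticAt.mul (AnalyticAt.mul (by fun_prop) ?_) ?_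
    · refine (((hDa.log hD).mul (analyticAt_const (v := -(lam+1)))).rexp).congr ?_
      filter_upwards [hDa.continuousAt.eventually (lt_mem_nhds hD)] with r hr
      exact (Real.rpow_def_of_pos hr _).symm
    · exact AnalyticAt.comp (g := fun z => ∑' n, qC lam n * z ^ n) hPh hZa
  have heq : (fun r => ∑' n, lC lam x y n * r ^ n) =ᶠ[nhds (1 / 20 : ℝ)]
      (fun r => ((1 - r ^ 2) * (1 - 2 * r * (x * y) + r ^ 2) ^ (-(lam + 1)) *
        ∑' k, qC lam k * (4 * ((1 - x ^ 2) * (1 - y ^ 2)) * r ^ 2 / (1 - 2 * r * (x * y) + r ^ 2) ^ 2) ^ k)) := by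
    filter_upwards [Ioo_mem_nhds (show (0 : ℝ) < 1 / 20 by norm_num) (show (1 / 20 : ℝ) < 1 / 10 by norm_num)] with r hr
    obtain ⟨hD, hz1⟩ := D_facts hx hy hr.1 (by linarith [hr.2])
    exact (small_identity hl hx hy hr.1 hr.2 hD hz1).tsum_eq
  exact a1.eqOn_of_preconnected_of_eventuallyEq a2 isPreconnected_Ioo (by norm_num) heq ⟨hr, hr'⟩


lemma poch_neg_nat (n k : ℕ) (hk : k ≤ n) :
    poch (-(n : ℝ)) k * (n - k).factorial = (-1) ^ k * n.factorial := by
  induction k with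
  | zero => simp [poch_zero]
  | succ k ih =>
    have h := ih (by omega)
    obtain ⟨p, rfl⟩ := Nat.exists_eq_add_of_le hk
    rw [show k + 1 + p - k = p + 1 by omega, Nat.factorial_succ] at h
    rw [Nat.add_sub_cancel_left, poch_succ, pow_succ]
    push_cast at h ⊢
    linear_combination (-1 : ℝ) * h

lemma jacobi_geg {lam : ℝ} (hl : 0 < lam) (n : ℕ) (x : ℝ) :
    jacobiP (lam - 1 / 2) (lam - 1 / 2) n x =
      poch (lam + 1 / 2) n / poch (2 * lam) n * (geg lam n).eval x := by
  rw [jacobiP, geg, Polynomial.eval_finsetSum, Finset.mul_sum, Finset.mul_sum]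
  refine Finset.sum_congr rfl fun k hk => ?_
  have hk' : k ≤ n := by simpa [Nat.lt_succ_iff] using hk
  simp only [Polynomial.eval_mul, Polynomial.eval_C, Polynomial.eval_pow, Polynomial.eval_sub,
    Polynomial.eval_one, Polynomial.eval_X]
  rw [show 1 / 2 * (1 - x) = (1 - x) / 2 by ring, show lam - 1 / 2 + 1 = lam + 1 / 2 by ring,
    show (n : ℝ) + (lam - 1 / 2) + (lam - 1 / 2) + 1 = 2 * lam + n by ring, gA]
  have h1 := poch_neg_nat n k hk'
  have h2 : poch (2 * lam) n * poch (2 * lam + n) k = 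
      4 ^ k * poch lam k * poch (lam + 1 / 2) k * poch (2 * lam + 2 * k) (n - k) := by
    rw [← poch_add, ← poch_double]
    have := poch_add (2 * lam) (2 * k) (n - k)
    push_cast at this
    rw [← this]
    congr 1
    omega
  have h3 := (poch_pos (show 0 < 2 * lam by linarith) n).ne'
  have h4 := (poch_pos (show 0 < lam + 1 / 2 by linarith) k).ne'
  have f1 : (n.factorial : ℝ) ≠ 0 := by positivity
  have f2 : (k.factorial : ℝ) ≠ 0 := by positivity
  have f3 : ((n - k).factorial : ℝ) ≠ 0 := by positivity
  rw [show (-4 : ℝ) = (-1) * 4 by norm_num, mul_pow (-1 : ℝ)]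
  have h1' : poch (-(n : ℝ)) k = (-1) ^ k * n.factorial / (n - k).factorial := by
    rw [eq_div_iff f3, h1]
  have h2' : poch (2 * lam + n) k = 
      4 ^ k * poch lam k * poch (lam + 1 / 2) k * poch (2 * lam + 2 * k) (n - k) / poch (2 * lam) n := by
    rw [eq_div_iff h3, ← h2]; ring
  rw [h1', h2']
  generalize poch (lam + 1 / 2) k = c1 at *
  generalize poch (lam + 1 / 2) n = c2 at *
  generalize poch (2 * lam + 2 * (k : ℝ)) (n - k) = c3 at *
  generalize poch (2 * lam) n = c4 at *
  field_simp

lemma Gamma_poch {a : ℝ} (ha : 0 < a) (n : ℕ) :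
    Real.Gamma (a + n) = poch a n * Real.Gamma a := by
  induction n with
  | zero => simp [poch_zero]
  | succ n ih =>
    push_cast
    rw [← add_assoc, Real.Gamma_add_one (by positivity), ih, poch_succ]
    ring

lemma lhs_term {lam : ℝ} (hl : 0 < lam) (n : ℕ) (t x y : ℝ) :
    (Rn (lam - 1 / 2) (lam - 1 / 2) n)⁻¹ * Real.exp (-(n : ℝ) * t) *
      jacobiP (lam - 1 / 2) (lam - 1 / 2) n x * jacobiP (lam - 1 / 2) (lam - 1 / 2) n y
      = lC lam x y n * Real.exp (-t) ^ n := by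
  rw [jacobi_geg hl, jacobi_geg hl, Rn, lC, ← Real.exp_nat_mul,
    show (n : ℝ) * -t = -(n : ℝ) * t by ring,
    show lam - 1 / 2 + (lam - 1 / 2) + 2 = 2 * lam + 1 by ring,
    show lam - 1 / 2 + (lam - 1 / 2) + n + 1 = 2 * lam + n by ring,
    show 2 * (n : ℝ) + (lam - 1 / 2) + (lam - 1 / 2) + 1 = 2 * (n + lam) by ring,
    show lam - 1 / 2 + 1 = lam + 1 / 2 by ring, Real.Gamma_add_one (by positivity),
    Gamma_poch (by linarith)]
  have h1 := Real.Gamma_pos_of_pos (show 0 < 2 * lam by linarith)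
  have h2 := (poch_pos (show 0 < 2 * lam by linarith) n).ne'
  have h4 := (poch_pos (show 0 < lam + 1 / 2 by linarith) n).ne'
  have f1 : (n.factorial : ℝ) ≠ 0 := by positivity
  have f2 : (n : ℝ) + lam ≠ 0 := by positivity
  generalize poch (lam + 1 / 2) n = c2 at *
  generalize poch (2 * lam) n = c4 at *
  generalize Real.Gamma (2 * lam) = G at *
  have := h1.ne'
  field_simp


/-- Subordinated ultraspherical Jacobi semigroup (`β = α > -1/2`): for every `t > 0` and
`x, y ∈ (-1,1)`,
`∑_{n≥0} R_n⁻¹ e^{-nt} P_n^{α,α}(x) P_n^{α,α}(y)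
  = (e^{((2α+1)/2)t}/2^{α+1/2}) sinh(t)/(cosh t - xy)^{α+3/2}
      ∑_{n≥0} [((2α+3)/4)_n ((2α+5)/4)_n/((α+1)_n n!)] [(1-x²)(1-y²)/(cosh t - xy)²]ⁿ`,
both series converging absolutely (the inner sum is the Gauss hypergeometric series
`₂F₁((2α+3)/4, (2α+5)/4; α+1; (1-x²)(1-y²)/(cosh t - xy)²)`). -/
theorem subordinated_ultraspherical_semigroup (α : ℝ) (hα : -(1 / 2 : ℝ) < α)
    (t : ℝ) (ht : 0 < t) (x y : ℝ) (hx : x ∈ Set.Ioo (-1 : ℝ) 1) (hy : y ∈ Set.Ioo (-1 : ℝ) 1) :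
    Summable (fun n : ℕ =>
        |(Rn α α n)⁻¹ * Real.exp (-(n : ℝ) * t) * jacobiP α α n x * jacobiP α α n y|) ∧
      Summable (fun n : ℕ =>
        |poch ((2 * α + 3) / 4) n * poch ((2 * α + 5) / 4) n /
            (poch (α + 1) n * (Nat.factorial n : ℝ)) *
          ((1 - x ^ 2) * (1 - y ^ 2) / (Real.cosh t - x * y) ^ 2) ^ n|) ∧
      ∑' n : ℕ, (Rn α α n)⁻¹ * Real.exp (-(n : ℝ) * t) * jacobiP α α n x * jacobiP α α n y =
        Real.exp ((2 * α + 1) / 2 * t) / 2 ^ (α + 1 / 2 : ℝ) *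
          (Real.sinh t / (Real.cosh t - x * y) ^ (α + 3 / 2 : ℝ)) *
          ∑' n : ℕ,
            poch ((2 * α + 3) / 4) n * poch ((2 * α + 5) / 4) n /
                (poch (α + 1) n * (Nat.factorial n : ℝ)) *
              ((1 - x ^ 2) * (1 - y ^ 2) / (Real.cosh t - x * y) ^ 2) ^ n := by
  obtain ⟨lam, rfl⟩ : ∃ lam, α = lam - 1 / 2 := ⟨α + 1 / 2, by ring⟩
  have hl : 0 < lam := by linarith
  set r : ℝ := Real.exp (-t) with hr
  have hr0 : 0 < r := Real.exp_pos _
  have hr1 : r < 1 := by rw [hr, Real.exp_lt_one_iff]; linarith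
  obtain ⟨hD, hz⟩ := D_facts hx hy hr0 hr1
  have het : Real.exp t = r⁻¹ := by rw [hr, Real.exp_neg, inv_inv]
  have hc : Real.cosh t - x * y = (1 - 2 * r * (x * y) + r ^ 2) / (2 * r) := by
    rw [Real.cosh_eq, het, ← hr]; field_simp; ring
  have hsh : Real.sinh t = (1 - r ^ 2) / (2 * r) := by
    rw [Real.sinh_eq, het, ← hr]; field_simp
  have hq : ∀ n : ℕ, poch ((2 * (lam - 1 / 2) + 3) / 4) n * poch ((2 * (lam - 1 / 2) + 5) / 4) n /
            (poch (lam - 1 / 2 + 1) n * (Nat.factorial n : ℝ)) *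
          ((1 - x ^ 2) * (1 - y ^ 2) / (Real.cosh t - x * y) ^ 2) ^ n
      = qC lam n * (4 * ((1 - x ^ 2) * (1 - y ^ 2)) * r ^ 2 / (1 - 2 * r * (x * y) + r ^ 2) ^ 2) ^ n := by
    intro n
    rw [qC, hc, show (2 * (lam - 1 / 2) + 3) / 4 = (lam + 1) / 2 by ring,
      show (2 * (lam - 1 / 2) + 5) / 4 = (lam + 2) / 2 by ring,
      show lam - 1 / 2 + 1 = lam + 1 / 2 by ring]
    congr 2
    field_simp
    norm_num
  simp only [hq, lhs_term hl]
  refine ⟨lC_summable hl (Set.Ioo_subset_Icc_self hx) (Set.Ioo_subset_Icc_self hy)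
    (by rw [abs_of_pos hr0]; exact hr1), qC_summable hl hz, ?_⟩
  rw [full_identity hl hx hy hr0 hr1]
  congr 1
  rw [hc, hsh, show (2 * (lam - 1 / 2) + 1) / 2 * t = -t * (-lam) by ring, Real.exp_mul, ← hr,
    show lam - 1 / 2 + 1 / 2 = lam by ring, show lam - 1 / 2 + 3 / 2 = lam + 1 by ring,
    Real.div_rpow hD.le (by positivity), Real.rpow_add_one (by positivity : 2 * r ≠ 0),
    Real.mul_rpow (by norm_num) hr0.le, Real.rpow_neg hr0.le, Real.rpow_neg hD.le]
  have e1 : 0 < r ^ lam := Real.rpow_pos_of_pos hr0 _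
  have e2 : (0 : ℝ) < 2 ^ lam := Real.rpow_pos_of_pos (by norm_num) _
  have e3 : 0 < (1 - 2 * r * (x * y) + r ^ 2) ^ (lam + 1) := Real.rpow_pos_of_pos hD _
  generalize (1 - 2 * r * (x * y) + r ^ 2) ^ (lam + 1) = Z at *
  field_simp
end

section
/- Let b < -1, let x_0 < -1 be the unique solution of (b-x)² = 4x(x+1) with x < -1, and for x ≠ -1 with (b-x)² + 4(x+1) ≥ 0 set φ_1 = x + 2 - b + √((b-x)² + 4(x+1)), b(φ,x) = -1 - √((b+1)² + 2φ(x+1)) and Λ(φ,x) = -(φ + b - b(φ,x))/2. Then: if (b²+3)/(2(b-1)) < x < x_0, the derivative ∂Λ/∂φ(φ_1,x) = -(1/2)(1 + (x+1)/√((b+1)² + 2φ_1(x+1))) is strictly positive; if x_0 < x < -1 or x > -1, then ∂Λ/∂φ(φ_1,x) is strictly negative. -/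
/-- Sign of `∂Λ/∂φ` at the boundary point `φ₁`: for `b < -1`, `x₀ < -1` the unique
solution of `(b-x)² = 4x(x+1)` with `x < -1`, and `x ≠ -1` with `(b-x)² + 4(x+1) ≥ 0`,
setting `φ₁ = x + 2 - b + √((b-x)² + 4(x+1))` and
`Λ(φ) = -(φ + b - (-1 - √((b+1)² + 2φ(x+1))))/2`:
if `(b²+3)/(2(b-1)) < x < x₀` then
`∂Λ/∂φ(φ₁,x) = -(1/2)(1 + (x+1)/√((b+1)² + 2φ₁(x+1)))` is strictly positive;
if `x₀ < x < -1` or `x > -1` then `∂Λ/∂φ(φ₁,x)` is strictly negative. -/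
theorem derivative_sign_at_boundary (b : ℝ) (hb : b < -1)
    (x₀ : ℝ) (hx₀lt : x₀ < -1) (hx₀ : (b - x₀) ^ 2 = 4 * x₀ * (x₀ + 1))
    (hx₀uniq : ∀ x, x < -1 → (b - x) ^ 2 = 4 * x * (x + 1) → x = x₀)
    (x : ℝ) (hxne : x ≠ -1) (hdisc : 0 ≤ (b - x) ^ 2 + 4 * (x + 1))
    (φ₁ : ℝ) (hφ₁ : φ₁ = x + 2 - b + Real.sqrt ((b - x) ^ 2 + 4 * (x + 1)))
    (Λ : ℝ → ℝ)
    (hΛ : ∀ φ, Λ φ = -(φ + b - (-1 - Real.sqrt ((b + 1) ^ 2 + 2 * φ * (x + 1)))) / 2) :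
    ((b ^ 2 + 3) / (2 * (b - 1)) < x → x < x₀ →
        deriv Λ φ₁ =
            -(1 / 2) * (1 + (x + 1) / Real.sqrt ((b + 1) ^ 2 + 2 * φ₁ * (x + 1))) ∧
          0 < deriv Λ φ₁) ∧
      ((x₀ < x ∧ x < -1) ∨ -1 < x → deriv Λ φ₁ < 0) := by
  set s := Real.sqrt ((b - x) ^ 2 + 4 * (x + 1)) with hs
  have hs0 : 0 ≤ s := Real.sqrt_nonneg _
  have hs2 : s ^ 2 = (b - x) ^ 2 + 4 * (x + 1) := Real.sq_sqrt hdisc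
  have hR : (b + 1) ^ 2 + 2 * φ₁ * (x + 1) = (x + 1 + s) ^ 2 := by
    rw [hφ₁]; linear_combination -hs2
  have hΛ' : Λ = fun φ =>
      -(φ + b - (-1 - Real.sqrt ((b + 1) ^ 2 + 2 * φ * (x + 1)))) / 2 := funext hΛ
  have key : 0 < x + 1 + s →
      Real.sqrt ((b + 1) ^ 2 + 2 * φ₁ * (x + 1)) = x + 1 + s ∧
      deriv Λ φ₁ =
        -(1 / 2) * (1 + (x + 1) / Real.sqrt ((b + 1) ^ 2 + 2 * φ₁ * (x + 1))) := by
    intro hp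
    have hsq : Real.sqrt ((b + 1) ^ 2 + 2 * φ₁ * (x + 1)) = x + 1 + s := by
      rw [hR, Real.sqrt_sq hp.le]
    refine ⟨hsq, ?_⟩
    have h1 : HasDerivAt (fun φ : ℝ => (b + 1) ^ 2 + 2 * φ * (x + 1)) (2 * 1 * (x + 1)) φ₁ :=
      (((hasDerivAt_id φ₁).const_mul 2).mul_const (x + 1)).const_add _
    have h2 := h1.sqrt (by rw [hR]; positivity)
    have h3 := ((((hasDerivAt_id φ₁).add_const b).sub (h2.const_sub (-1))).neg).div_const 2
    rw [hΛ']
    refine HasDerivAt.deriv (h3.congr_deriv ?_)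
    rw [hsq]
    field_simp
    ring
  have hr : 3 * x₀ + 1 + 2 * b < 0 := by
    have h : (-1 - x₀) * (3 * x₀ + 1 + 2 * b) = -(b + 1) ^ 2 := by
      linear_combination hx₀
    have h' : 0 < (b + 1) ^ 2 := by
      have : b + 1 ≠ 0 := by linarith
      positivity
    by_contra hc
    push Not at hc
    nlinarith [mul_nonneg (by linarith : (0:ℝ) ≤ -1 - x₀) hc]
  have hf : 4 * (x + 1) ^ 2 - s ^ 2 = (x - x₀) * (3 * x + 3 * x₀ + 4 + 2 * b) := by
    rw [hs2]; linear_combination -hx₀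
  constructor
  · intro hlo hx
    have hlo' : x * (2 * (b - 1)) < b ^ 2 + 3 :=
      (div_lt_iff_of_neg (by linarith)).1 hlo
    have hp : 0 < x + 1 + s := by
      have : -(x + 1) < s := lt_of_pow_lt_pow_left₀ 2 hs0 (by rw [hs2]; nlinarith)
      linarith
    obtain ⟨hsq, hd⟩ := key hp
    refine ⟨hd, ?_⟩
    have hlt : s < -2 * (x + 1) := by
      refine lt_of_pow_lt_pow_left₀ 2 (by linarith) ?_
      have := mul_pos_of_neg_of_neg (by linarith : x - x₀ < 0)
        (by linarith : 3 * x + 3 * x₀ + 4 + 2 * b < 0)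
      nlinarith
    have : (x + 1) / (x + 1 + s) < -1 := by
      rw [div_lt_iff₀ hp]; linarith
    rw [hd, hsq]; linarith
  · intro h
    have h2 : 0 < x + 1 + s ∧ 0 < 2 * (x + 1) + s := by
      rcases h with ⟨h1, h2⟩ | h
      · have : -2 * (x + 1) < s := by
          refine lt_of_pow_lt_pow_left₀ 2 hs0 ?_
          have := mul_neg_of_pos_of_neg (by linarith : 0 < x - x₀)
            (by linarith : 3 * x + 3 * x₀ + 4 + 2 * b < 0)
          nlinarith
        constructor <;> linarith
      · constructor <;> linarith
    obtain ⟨hsq, hd⟩ := key h2.1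
    have : -1 < (x + 1) / (x + 1 + s) := by
      rw [lt_div_iff₀ h2.1]; linarith [h2.2]
    rw [hd, hsq]; linarith
end
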